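/- Let F = C(q^{1/2}, t^{1/2}) and let x, y, z be the operators on F(X) given by x = X + X^{-1}, y = V(X)ϖ + V(X^{-1})ϖ^{-1}, z = q^{-1/2}X^{-1}V(X)ϖ + q^{-1/2}XV(X^{-1})ϖ^{-1}, with V(X) = (t^{1/2}X - t^{-1/2}X^{-1})/(X - X^{-1}) and (ϖf)(X) = f(qX). Then, writing A = q^{-1/2} and λ = q^{-1}t, the cubic relation A^{-2}x^2 + A^{2}y^2 + A^{-2}z^2 - A^{-1}xyz = (A^2 + A^{-2} + λ + λ^{-1})·Id holds in End F(X). -/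

import Mathlib

noncomputable section

theorem aux_ne {F : Type*} [Field F] (a : F) (h : a ≠ 0) (b : F) :
    algebraMap F (RatFunc F) a * RatFunc.X ^ 2 - algebraMap F (RatFunc F) b ≠ 0 := by
  have hp : (Polynomial.C a * Polynomial.X ^ 2 - Polynomial.C b : Polynomial F) ≠ 0 := by
    intro h0
    have := congrArg (fun p => Polynomial.coeff p 2) h0
    simp [Polynomial.coeff_C] at this
    exact h this
  have := (map_ne_zero_iff (algebraMap (Polynomial F) (RatFunc F))
    (RatFunc.algebraMap_injective F)).2 hp
  simpa [RatFunc.algebraMap_X, RatFunc.algebraMap_C, RatFunc.algebraMap_eq_C] using this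

/-- with `A = q^{-1/2}` and `λ = q⁻¹t`, the operators
`x = X + X⁻¹`, `y = V(X)ϖ + V(X⁻¹)ϖ⁻¹`, `z = q^{-1/2}X⁻¹V(X)ϖ + q^{-1/2}XV(X⁻¹)ϖ⁻¹`
on `F(X)` satisfy the cubic relation
`A⁻²x² + A²y² + A⁻²z² - A⁻¹xyz = (A² + A⁻² + λ + λ⁻¹)·Id`. -/
theorem cubic_relation_polynomial_rep
    (F : Type*) [Field F] (q2 t2 : F) (hq : q2 ≠ 0) (ht : t2 ≠ 0)
    (ϖ : RatFunc F ≃ₐ[F] RatFunc F)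
    (hϖ : ϖ RatFunc.X = algebraMap F (RatFunc F) (q2 ^ 2) * RatFunc.X) :
    let X : RatFunc F := RatFunc.X
    let c : F → RatFunc F := algebraMap F (RatFunc F)
    let V : RatFunc F := (c t2 * X - c t2⁻¹ * X⁻¹) / (X - X⁻¹)
    let W : RatFunc F := (c t2 * X⁻¹ - c t2⁻¹ * X) / (X⁻¹ - X)
    let x : RatFunc F →ₗ[F] RatFunc F := LinearMap.mulLeft F (X + X⁻¹)
    let y : RatFunc F →ₗ[F] RatFunc F :=
      LinearMap.mulLeft F V ∘ₗ ϖ.toLinearMap + LinearMap.mulLeft F W ∘ₗ ϖ.symm.toLinearMap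
    let z : RatFunc F →ₗ[F] RatFunc F :=
      LinearMap.mulLeft F (c q2⁻¹ * X⁻¹ * V) ∘ₗ ϖ.toLinearMap +
        LinearMap.mulLeft F (c q2⁻¹ * X * W) ∘ₗ ϖ.symm.toLinearMap
    let lam : F := (q2 ^ 2)⁻¹ * t2 ^ 2
    (q2 ^ 2) • (x ∘ₗ x) + ((q2 ^ 2)⁻¹) • (y ∘ₗ y) + (q2 ^ 2) • (z ∘ₗ z)
        - q2 • (x ∘ₗ y ∘ₗ z)
      = ((q2 ^ 2)⁻¹ + q2 ^ 2 + lam + lam⁻¹) • (LinearMap.id : RatFunc F →ₗ[F] RatFunc F) := by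
  intro X c V W x y z lam
  have hX : X ≠ 0 := RatFunc.X_ne_zero
  have hcq : c q2 ≠ 0 := by simpa [c] using hq
  have hct : c t2 ≠ 0 := by simpa [c] using ht
  have hX1 : ϖ X = c q2 ^ 2 * X := by simpa [c, X] using hϖ
  have hcc : ∀ a, ϖ (c a) = c a := fun a => ϖ.commutes a
  have hcs : ∀ a, ϖ.symm (c a) = c a := fun a => ϖ.symm.commutes a
  have hX2 : ϖ.symm X = (c q2 ^ 2)⁻¹ * X := by
    rw [AlgEquiv.symm_apply_eq, map_mul, map_inv₀, map_pow, hcc, hX1]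
    field_simp
  have hci : ∀ a, c a⁻¹ = (c a)⁻¹ := fun a => map_inv₀ (algebraMap F (RatFunc F)) a
  have d1 : X ^ 2 - 1 ≠ 0 := by simpa [X] using aux_ne (1 : F) one_ne_zero 1
  have d2 : c q2 ^ 4 * X ^ 2 - 1 ≠ 0 := by
    simpa [X, c] using aux_ne (q2 ^ 4) (pow_ne_zero 4 hq) 1
  have d3 : X ^ 2 - c q2 ^ 4 ≠ 0 := by
    have h3 := aux_ne (1 : F) one_ne_zero (q2 ^ 4)
    rwa [map_one, one_mul, map_pow] at h3
  have hsm : ∀ (a : F) (g : RatFunc F), a • g = c a * g := fun a g => Algebra.smul_def a g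
  have hV : V = (c t2 ^ 2 * X ^ 2 - 1) / (c t2 * (X ^ 2 - 1)) := by
    have : X - X⁻¹ = (X ^ 2 - 1) / X := by field_simp
    simp only [V, this, hci]
    field_simp
  have hW : W = (X ^ 2 - c t2 ^ 2) / (c t2 * (X ^ 2 - 1)) := by
    have : X⁻¹ - X = -((X ^ 2 - 1) / X) := by field_simp; ring
    simp only [W, this, hci]
    field_simp
    ring
  have hVp : ϖ V = (c t2 ^ 2 * c q2 ^ 4 * X ^ 2 - 1) / (c t2 * (c q2 ^ 4 * X ^ 2 - 1)) := by
    rw [hV]; simp only [map_div₀, map_mul, map_sub, map_pow, map_one, hcc, hX1]; ring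
  have hWp : ϖ W = (c q2 ^ 4 * X ^ 2 - c t2 ^ 2) / (c t2 * (c q2 ^ 4 * X ^ 2 - 1)) := by
    rw [hW]; simp only [map_div₀, map_mul, map_sub, map_pow, map_one, hcc, hX1]; ring
  have e3 : ((c q2 ^ 2)⁻¹ * X) ^ 2 - 1 = (X ^ 2 - c q2 ^ 4) / c q2 ^ 4 := by field_simp
  have hVm : ϖ.symm V = (c t2 ^ 2 * X ^ 2 - c q2 ^ 4) / (c t2 * (X ^ 2 - c q2 ^ 4)) := by
    rw [hV]; simp only [map_div₀, map_mul, map_sub, map_pow, map_one, hcs, hX2, e3]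
    field_simp
  have hWm : ϖ.symm W = (X ^ 2 - c t2 ^ 2 * c q2 ^ 4) / (c t2 * (X ^ 2 - c q2 ^ 4)) := by
    rw [hW]; simp only [map_div₀, map_mul, map_sub, map_pow, map_one, hcs, hX2, e3]
    field_simp
  have hlam : c ((q2 ^ 2)⁻¹ + q2 ^ 2 + lam + lam⁻¹) = (c q2 ^ 2)⁻¹ + c q2 ^ 2
      + (c q2 ^ 2)⁻¹ * c t2 ^ 2 + ((c q2 ^ 2)⁻¹ * c t2 ^ 2)⁻¹ := by
    simp only [c, lam, map_add, map_inv₀, map_mul, map_pow]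
  have hc2 : c (q2 ^ 2) = c q2 ^ 2 := map_pow (algebraMap F (RatFunc F)) _ _
  refine LinearMap.ext fun f => ?_
  simp only [LinearMap.sub_apply, LinearMap.add_apply, LinearMap.smul_apply,
    LinearMap.comp_apply, LinearMap.id_apply, x, y, z, LinearMap.mulLeft_apply,
    AlgEquiv.toLinearMap_apply, hsm, hlam, map_add, map_mul, hci, map_inv₀, hcc, hcs,
    AlgEquiv.apply_symm_apply, AlgEquiv.symm_apply_apply, hX1, hX2, hVp, hWp, hVm, hWm, hc2]
  rw [hV, hW]
  generalize ϖ (ϖ f) = a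
  generalize ϖ.symm (ϖ.symm f) = b
  clear_value X c
  generalize c q2 = Q at *
  generalize c t2 = T at *
  field_simp
  ring
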